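/- Let λ > 0, let g be continuously differentiable on the closed unit ball B^d, and set f(x) = (1−‖x‖²)·g(x). Then for every n ≥ 2 and all x ∈ B^d, proj_{V_n^d(I)} f(x) = (1−‖x‖²)·proj_{V_{n−2}^d(W_1)} g(x), where proj_{V_{n−2}^d(W_1)} g(x) = (d(d/2+1)/ω_d)·∫_{B^d} g(y) P_{n−2}(W_1; x, y) (1−‖y‖²) dy. -/

import Mathlib

open MeasureTheory Metric MvPolynomial RealInnerProductSpace

noncomputable section

/-- Generalized binomial coefficient `C(z, k)` for real `z`. -/
def genBinom (z : ℝ) (k : ℕ) : ℝ := (∏ i ∈ Finset.range k, (z - i)) / (Nat.factorial k)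

/-- The Jacobi polynomial `P_n^{(a,b)}`, normalized so that `P_n^{(a,b)}(1) = C(n+a, n)`. -/
def jacobiPoly (n : ℕ) (a b : ℝ) : Polynomial ℝ :=
  ∑ s ∈ Finset.range (n + 1),
    Polynomial.C (genBinom ((n : ℝ) + a) (n - s) * genBinom ((n : ℝ) + b) s) *
      (Polynomial.C (2⁻¹) * (Polynomial.X - 1)) ^ s *
      (Polynomial.C (2⁻¹) * (Polynomial.X + 1)) ^ (n - s)

/-- The Jacobi polynomial as a real function. -/
def jacobiR (n : ℕ) (a b x : ℝ) : ℝ := (jacobiPoly n a b).eval x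

/-- The Laplace operator on polynomials in `d` variables. -/
def mvLaplacian {d : ℕ} (p : MvPolynomial (Fin d) ℝ) : MvPolynomial (Fin d) ℝ :=
  ∑ i : Fin d, pderiv i (pderiv i p)

/-- The polynomial `‖x‖² = x₁² + ⋯ + x_d²`. -/
def sumSq (d : ℕ) : MvPolynomial (Fin d) ℝ := ∑ i : Fin d, X i ^ 2

/-- `σ_m`, the dimension of the space of spherical harmonics of degree `m` in `d` variables. -/
def sigmaDim (d m : ℕ) : ℕ := (m + d - 1).choose (d - 1) - (m + d - 3).choose (d - 1)

/-- The surface area `ω_d = 2 π^{d/2} / Γ(d/2)` of the unit sphere `S^{d-1}`. -/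
def omegaD (d : ℕ) : ℝ := 2 * Real.pi ^ ((d : ℝ) / 2) / Real.Gamma ((d : ℝ) / 2)

/-- Euclidean space `ℝ^d`. -/
abbrev Edim (d : ℕ) := EuclideanSpace ℝ (Fin d)

/-- Evaluation of a polynomial in `d` variables at a point of `ℝ^d`. -/
def pEval {d : ℕ} (p : MvPolynomial (Fin d) ℝ) (x : Edim d) : ℝ := eval (fun i => x i) p

/-- The surface measure `dω` on the unit sphere `S^{d-1}`. -/
def sphMeasure (d : ℕ) : Measure (sphere (0 : Edim d) 1) :=
  (volume : Measure (Edim d)).toSphere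

/-- The Sobolev inner product `⟨f,g⟩_I`. -/
def innerI (d : ℕ) (lam : ℝ) (f g : Edim d → ℝ) : ℝ :=
  (lam / omegaD d) * ∫ x in closedBall (0 : Edim d) 1, ⟪gradient f x, gradient g x⟫ +
    (1 / omegaD d) * ∫ y : sphere (0 : Edim d) 1, f y * g y ∂(sphMeasure d)

/-- The Sobolev inner product `⟨f,g⟩_II`. -/
def innerII (d : ℕ) (lam : ℝ) (f g : Edim d → ℝ) : ℝ :=
  (lam / omegaD d) * ∫ x in closedBall (0 : Edim d) 1, ⟪gradient f x, gradient g x⟫ +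
    f 0 * g 0

/-- The polynomials `U_{j,ν}^n`. -/
def Upoly (d : ℕ) (Y : (m : ℕ) → Fin (sigmaDim d m) → MvPolynomial (Fin d) ℝ)
    (n j : ℕ) (ν : Fin (sigmaDim d (n - 2 * j))) : MvPolynomial (Fin d) ℝ :=
  if j = 0 then Y (n - 2 * j) ν
  else (1 - sumSq d) *
      Polynomial.aeval (2 * sumSq d - 1)
        (jacobiPoly (j - 1) 1 ((n : ℝ) - 2 * (j : ℝ) + ((d : ℝ) - 2) / 2)) *
      Y (n - 2 * j) ν


/-- The orthogonal polynomials
`P_{j,ν}^m(W₁;x) = P_j^{(1, m-2j+(d-2)/2)}(2‖x‖²-1) Y_ν^{m-2j}(x)` of `V_m^d(W₁)`. -/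
def PW1 (d : ℕ) (Y : (m : ℕ) → Fin (sigmaDim d m) → MvPolynomial (Fin d) ℝ)
    (m j : ℕ) (ν : Fin (sigmaDim d (m - 2 * j))) : MvPolynomial (Fin d) ℝ :=
  Polynomial.aeval (2 * sumSq d - 1)
      (jacobiPoly j 1 ((m : ℝ) - 2 * (j : ℝ) + ((d : ℝ) - 2) / 2)) *
    Y (m - 2 * j) ν

/-- The reproducing kernel `P_m(W₁; x, y)` of `V_m^d(W₁)`. -/
def kernW1 (d : ℕ) (Y : (m : ℕ) → Fin (sigmaDim d m) → MvPolynomial (Fin d) ℝ)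
    (m : ℕ) (x y : Edim d) : ℝ :=
  ∑ j ∈ Finset.range (m / 2 + 1), ∑ ν : Fin (sigmaDim d (m - 2 * j)),
    pEval (PW1 d Y m j ν) x * pEval (PW1 d Y m j ν) y /
      (((d : ℝ) * ((d : ℝ) / 2 + 1) / omegaD d) *
        ∫ z in closedBall (0 : Edim d) 1, (pEval (PW1 d Y m j ν) z) ^ 2 * (1 - ‖z‖ ^ 2))

/-- The projection `proj_{V_n^d(I)} f`. -/
def projI (d : ℕ) (lam : ℝ) (Y : (m : ℕ) → Fin (sigmaDim d m) → MvPolynomial (Fin d) ℝ)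
    (n : ℕ) (f : Edim d → ℝ) (x : Edim d) : ℝ :=
  ∑ j ∈ Finset.range (n / 2 + 1), ∑ ν : Fin (sigmaDim d (n - 2 * j)),
    innerI d lam f (pEval (Upoly d Y n j ν)) /
        innerI d lam (pEval (Upoly d Y n j ν)) (pEval (Upoly d Y n j ν)) *
      pEval (Upoly d Y n j ν) x

/-- The projection `Y_m f` of `f` onto the spherical harmonics of degree `m`. -/
def Yproj (d : ℕ) (Y : (m : ℕ) → Fin (sigmaDim d m) → MvPolynomial (Fin d) ℝ)
    (m : ℕ) (f : Edim d → ℝ) (x : Edim d) : ℝ :=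
  ∑ ν : Fin (sigmaDim d m),
    ((1 / omegaD d) * ∫ y : sphere (0 : Edim d) 1,
        f y * pEval (Y m ν) y ∂(sphMeasure d)) *
      pEval (Y m ν) x
/-
Write `U = (1 - ‖x‖²) P`, where `P` is a basis polynomial of `V_{n-2}(W₁)`, for the members of the
basis of `V_n(I)` with `j ≥ 1`. In the variable `s = ‖x‖²` the radial factor of `P` solves the
Jacobi equation, which says exactly that `Δ U = -c P` for a constant `c > 0`. Since
`f = (1 - ‖x‖²) g` vanishes on the sphere, Green's formula gives `⟨f, U⟩_I = (λ / ω_d) c ∫ f P`, a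
constant multiple of `⟨g, P⟩_{W₁}`; the same constant relates `⟨U, U⟩_I` to `⟨P, P⟩_{W₁}`, so the
Fourier coefficients of `f` and `g` agree. The members with `j = 0` are harmonic, and Green's
formula shows that they are orthogonal to `f`.
-/

open Set Topology Laplacian
open scoped Polynomial

section IntegrationByParts

theorem frontier_inter_nonempty_of_isPreconnected {X : Type*} [TopologicalSpace X] {s t : Set X}
    (ht : IsPreconnected t) (hs : (t ∩ s).Nonempty) (hsc : (t ∩ sᶜ).Nonempty) :
    (t ∩ frontier s).Nonempty := by
  rw [frontier_eq_closure_inter_closure]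
  refine isPreconnected_closed_iff.1 ht _ _ isClosed_closure isClosed_closure ?_
    (hs.mono (inter_subset_inter_right t subset_closure))
    (hsc.mono (inter_subset_inter_right t subset_closure))
  exact fun x _ => (em (x ∈ s)).imp (subset_closure ·) (subset_closure ·)

theorem lipschitzWith_indicator_of_frontier {E F : Type*} [NormedAddCommGroup E] [NormedSpace ℝ E]
    [PseudoMetricSpace F] [Zero F] {s : Set E} {f : E → F} {K : NNReal} (hs : IsClosed s)
    (hf : LipschitzOnWith K f s) (hf0 : ∀ x ∈ frontier s, f x = 0) :
    LipschitzWith K (s.indicator f) := by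
  have dist_zero_le : ∀ x ∈ s, ∀ y ∉ s, dist (f x) 0 ≤ K * dist x y := by
    intro x hx y hy
    obtain ⟨z, hz_seg, hz⟩ : (segment ℝ x y ∩ frontier s).Nonempty :=
      frontier_inter_nonempty_of_isPreconnected (convex_segment x y).isPreconnected
        ⟨x, left_mem_segment ℝ x y, hx⟩ ⟨y, right_mem_segment ℝ x y, hy⟩
    have hxz : dist x z ≤ dist x y := by
      linarith [dist_add_dist_of_mem_segment hz_seg, dist_nonneg (x := z) (y := y)]
    calc dist (f x) 0 = dist (f x) (f z) := by rw [hf0 z hz]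
      _ ≤ K * dist x z := hf.dist_le_mul x hx z (hs.frontier_subset hz)
      _ ≤ K * dist x y := by gcongr
  refine LipschitzWith.of_dist_le_mul fun x y => ?_
  by_cases hx : x ∈ s <;> by_cases hy : y ∈ s
  · simpa only [indicator_of_mem hx, indicator_of_mem hy] using hf.dist_le_mul x hx y hy
  · simpa only [indicator_of_mem hx, indicator_of_notMem hy] using dist_zero_le x hx y hy
  · simpa only [indicator_of_notMem hx, indicator_of_mem hy, dist_comm] using
      dist_zero_le y hy x hx
  · simp only [indicator_of_notMem hx, indicator_of_notMem hy, dist_self]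
    positivity

variable {E : Type*} [NormedAddCommGroup E] [NormedSpace ℝ E] [FiniteDimensional ℝ E]
  [MeasurableSpace E] [BorelSpace E] {μ : Measure E} [μ.IsAddHaarMeasure]
  {s : Set E} {f w : E → ℝ} {K : NNReal}

theorem integrableOn_fderiv_of_lipschitzOnWith (hs : IsCompact s) (hμs : μ (frontier s) = 0)
    (hf : LipschitzOnWith K f s) (v : E) : IntegrableOn (fun x => fderiv ℝ f x v) s μ := by
  obtain ⟨F, hF, hfF⟩ := hf.extend_real
  refine ((hF.locallyIntegrable_lineDeriv v).integrableOn_isCompact hs).congr_fun_ae ?_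
  filter_upwards [ae_restrict_mem hs.measurableSet,
    ae_restrict_of_ae (measure_eq_zero_iff_ae_notMem.1 hμs),
    ae_restrict_of_ae hF.ae_differentiableAt] with x hxs hx hFx
  have hxF : f =ᶠ[𝓝 x] F :=
    hfF.eventuallyEq_of_mem (mem_interior_iff_mem_nhds.1 (self_sdiff_frontier s ▸ ⟨hxs, hx⟩))
  rw [hFx.lineDeriv_eq_fderiv, hxF.fderiv_eq]

theorem setIntegral_fderiv_eq_zero_of_lipschitzOnWith (hs : IsCompact s)
    (hμs : μ (frontier s) = 0) (hf : LipschitzOnWith K f s) (hf0 : ∀ x ∈ frontier s, f x = 0)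
    (v : E) : ∫ x in s, fderiv ℝ f x v ∂μ = 0 := by
  have hF : LipschitzWith K (s.indicator f) :=
    lipschitzWith_indicator_of_frontier hs.isClosed hf hf0
  have lineDeriv_ae : ∀ᵐ x ∂μ,
      lineDeriv ℝ (s.indicator f) x v = s.indicator (fun x => fderiv ℝ f x v) x := by
    filter_upwards [measure_eq_zero_iff_ae_notMem.1 hμs, hF.ae_differentiableAt] with x hx hFx
    rw [hFx.lineDeriv_eq_fderiv]
    by_cases hxs : x ∈ s
    · have hxF : s.indicator f =ᶠ[𝓝 x] f := (eqOn_indicator).eventuallyEq_of_mem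
        (mem_interior_iff_mem_nhds.1 (self_sdiff_frontier s ▸ ⟨hxs, hx⟩))
      rw [indicator_of_mem hxs, hxF.fderiv_eq]
    · have hxF : s.indicator f =ᶠ[𝓝 x] fun _ => 0 :=
        (eqOn_indicator').eventuallyEq_of_mem (hs.isClosed.isOpen_compl.mem_nhds hxs)
      rw [indicator_of_notMem hxs, hxF.fderiv_eq, fderiv_fun_const, Pi.zero_apply,
        zero_apply]
  have hcomp : HasCompactSupport (s.indicator f) :=
    HasCompactSupport.intro hs fun x hx => indicator_of_notMem hx f
  have h := LipschitzWith.integral_lineDeriv_mul_eq (μ := μ) (LipschitzWith.const (1 : ℝ)) hF hcomp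
    (-v)
  have lineDeriv_one (x : E) : lineDeriv ℝ (fun _ : E => (1 : ℝ)) x (-v) = 0 := by simp [lineDeriv]
  simp only [lineDeriv_one, zero_mul, integral_zero, neg_neg, mul_one] at h
  rw [← integral_indicator hs.measurableSet, ← integral_congr_ae lineDeriv_ae, ← h]

theorem integrableOn_fderiv_mul (hs : IsCompact s) (hsc : Convex ℝ s) (hf : ContDiffOn ℝ 1 f s)
    (hw : ContinuousOn w s) (v : E) : IntegrableOn (fun x => fderiv ℝ f x v * w x) s μ := by
  obtain ⟨K, hK⟩ := hf.exists_lipschitzOnWith one_ne_zero hsc hs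
  exact (integrableOn_fderiv_of_lipschitzOnWith hs (hsc.addHaar_frontier μ) hK v).mul_continuousOn
    hw hs

theorem setIntegral_fderiv_mul_eq_neg (hs : IsCompact s) (hsc : Convex ℝ s)
    (hf : ContDiffOn ℝ 1 f s) (hw : ContDiffOn ℝ 1 w s) (hf0 : ∀ x ∈ frontier s, f x = 0)
    (v : E) : ∫ x in s, fderiv ℝ f x v * w x ∂μ = -∫ x in s, fderiv ℝ w x v * f x ∂μ := by
  have hμs : μ (frontier s) = 0 := hsc.addHaar_frontier μ
  obtain ⟨K, hK⟩ := (hf.mul hw).exists_lipschitzOnWith one_ne_zero hsc hs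
  have fderiv_mul_ae : ∀ᵐ x ∂μ.restrict s, fderiv ℝ (f * w) x v =
      fderiv ℝ f x v * w x + fderiv ℝ w x v * f x := by
    filter_upwards [ae_restrict_mem hs.measurableSet,
      ae_restrict_of_ae (measure_eq_zero_iff_ae_notMem.1 hμs)] with x hxs hx
    have hnhds : s ∈ 𝓝 x :=
      mem_interior_iff_mem_nhds.1 (self_sdiff_frontier s ▸ ⟨hxs, hx⟩)
    rw [fderiv_mul ((hf.contDiffAt hnhds).differentiableAt one_ne_zero)
      ((hw.contDiffAt hnhds).differentiableAt one_ne_zero)]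
    simp only [add_apply, smul_apply, smul_eq_mul]
    ring
  rw [eq_neg_iff_add_eq_zero, ← integral_add (integrableOn_fderiv_mul hs hsc hf hw.continuousOn v)
    (integrableOn_fderiv_mul hs hsc hw hf.continuousOn v), ← integral_congr_ae fderiv_mul_ae]
  exact setIntegral_fderiv_eq_zero_of_lipschitzOnWith hs hμs hK
    (fun x hx => by simp [hf0 x hx]) v

end IntegrationByParts

section Green

variable {E : Type*} [NormedAddCommGroup E] [InnerProductSpace ℝ E] [FiniteDimensional ℝ E]

theorem inner_gradient_gradient_eq_sum {ι : Type*} [Fintype ι] (e : OrthonormalBasis ι ℝ E)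
    (f u : E → ℝ) (x : E) :
    ⟪gradient f x, gradient u x⟫ = ∑ i, fderiv ℝ f x (e i) * fderiv ℝ u x (e i) := by
  rw [← e.sum_inner_mul_inner]
  refine Finset.sum_congr rfl fun i _ => ?_
  rw [inner_gradient_left, real_inner_comm, inner_gradient_left]

theorem laplacian_eq_sum_fderiv_fderiv {ι : Type*} [Fintype ι] (e : OrthonormalBasis ι ℝ E)
    {u : E → ℝ} (hu : ContDiff ℝ 2 u) (x : E) :
    Δ u x = ∑ i, fderiv ℝ (fun y => fderiv ℝ u y (e i)) x (e i) := by
  have hu' : DifferentiableAt ℝ (fderiv ℝ u) x :=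
    (hu.fderiv_right (m := 1) (by norm_num)).differentiable one_ne_zero x
  rw [InnerProductSpace.laplacian_eq_iteratedFDeriv_orthonormalBasis u e]
  refine Finset.sum_congr rfl fun i _ => ?_
  rw [iteratedFDeriv_two_apply, fderiv_clm_apply hu' (differentiableAt_const _)]
  simp

theorem setIntegral_inner_gradient_eq_neg [MeasurableSpace E] [BorelSpace E] {μ : Measure E}
    [μ.IsAddHaarMeasure] {s : Set E} {f u : E → ℝ} (hs : IsCompact s) (hsc : Convex ℝ s)
    (hf : ContDiffOn ℝ 1 f s) (hf0 : ∀ x ∈ frontier s, f x = 0) (hu : ContDiff ℝ 2 u) :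
    ∫ x in s, ⟪gradient f x, gradient u x⟫ ∂μ = -∫ x in s, f x * Δ u x ∂μ := by
  let e := stdOrthonormalBasis ℝ E
  have hu' (i) : ContDiffOn ℝ 1 (fun x => fderiv ℝ u x (e i)) s :=
    ((hu.fderiv_right (m := 1) (by norm_num)).clm_apply contDiff_const).contDiffOn
  simp_rw [inner_gradient_gradient_eq_sum e, laplacian_eq_sum_fderiv_fderiv e hu, mul_comm (f _),
    Finset.sum_mul]
  rw [integral_finsetSum _ fun i _ => integrableOn_fderiv_mul hs hsc hf (hu' i).continuousOn (e i),
    integral_finsetSum _ fun i _ => integrableOn_fderiv_mul hs hsc (hu' i) hf.continuousOn (e i),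
    ← Finset.sum_neg_distrib]
  exact Finset.sum_congr rfl fun i _ =>
    setIntegral_fderiv_mul_eq_neg hs hsc hf (hu' i) hf0 (e i)

end Green

section PolynomialCalculus

variable {d : ℕ}

theorem pEval_mul (p q : MvPolynomial (Fin d) ℝ) (x : Edim d) :
    pEval (p * q) x = pEval p x * pEval q x :=
  map_mul _ p q

theorem pEval_one_sub_sumSq (x : Edim d) : pEval (1 - sumSq d) x = 1 - ‖x‖ ^ 2 := by
  simp [pEval, sumSq, EuclideanSpace.real_norm_sq_eq]

theorem contDiff_pEval {n : WithTop ℕ∞} (p : MvPolynomial (Fin d) ℝ) :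
    ContDiff ℝ n (pEval p) :=
  (AnalyticOnNhd.eval_continuousLinearMap' (fun i => (EuclideanSpace.proj i : Edim d →L[ℝ] ℝ))
    p).contDiff

theorem fderiv_pEval_single (p : MvPolynomial (Fin d) ℝ) (i : Fin d) (x : Edim d) :
    fderiv ℝ (pEval p) x (EuclideanSpace.single i 1) = pEval (pderiv i p) x := by
  have hdiff (q : MvPolynomial (Fin d) ℝ) : DifferentiableAt ℝ (pEval q) x :=
    (contDiff_pEval (n := 1) q).differentiable one_ne_zero x
  induction p using MvPolynomial.induction_on with
  | C a =>
    have hC : pEval (C a : MvPolynomial (Fin d) ℝ) = fun _ => a := by ext; simp [pEval]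
    simp [hC, pEval]
  | add p q hp hq =>
    have hadd : pEval (p + q) = pEval p + pEval q := by ext; simp [pEval]
    rw [hadd, fderiv_add (hdiff p) (hdiff q), add_apply, hp, hq]
    simp [pEval]
  | mul_X p j hp =>
    have hmul : pEval (p * X j) = pEval p * fun y => y j := by ext; simp [pEval]
    have hj : HasFDerivAt (fun y : Edim d => y j) (EuclideanSpace.proj j : Edim d →L[ℝ] ℝ) x :=
      (EuclideanSpace.proj j : Edim d →L[ℝ] ℝ).hasFDerivAt
    rw [hmul, fderiv_mul (hdiff p) hj.differentiableAt, hj.fderiv]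
    simp [pEval, hp, Pi.single_apply, eq_comm, apply_ite, mul_comm]

theorem laplacian_pEval (p : MvPolynomial (Fin d) ℝ) : Δ (pEval p) = pEval (mvLaplacian p) := by
  ext x
  rw [laplacian_eq_sum_fderiv_fderiv (EuclideanSpace.basisFun (Fin d) ℝ) (contDiff_pEval p)]
  simp only [EuclideanSpace.basisFun_apply, fderiv_pEval_single]
  simp [pEval, mvLaplacian]

end PolynomialCalculus

section JacobiEquation

theorem genBinom_succ (z : ℝ) (k : ℕ) :
    genBinom z (k + 1) * (k + 1) = genBinom z k * (z - k) := by
  have : (Nat.factorial k : ℝ) ≠ 0 := by positivity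
  rw [genBinom, genBinom, Finset.prod_range_succ, Nat.factorial_succ]
  push_cast
  field_simp

/-- The coefficient of `(s - 1) ^ i * s ^ (n - i)` in the shifted Jacobi polynomial
`P_n^{(a,b)}(2s - 1)`. -/
def jacobiCoeff (n : ℕ) (a b : ℝ) (i : ℕ) : ℝ :=
  genBinom (n + a) (n - i) * genBinom (n + b) i

theorem jacobiCoeff_succ {n i : ℕ} (a b : ℝ) (hi : i < n) :
    jacobiCoeff n a b (i + 1) * ((i + 1) * (i + 1 + a)) =
      jacobiCoeff n a b i * ((n - i) * (n - i + b)) := by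
  obtain ⟨l, rfl⟩ : ∃ l, n = i + (l + 1) := ⟨n - i - 1, by omega⟩
  have ha := genBinom_succ (((i + (l + 1) : ℕ) : ℝ) + a) l
  have hb := genBinom_succ (((i + (l + 1) : ℕ) : ℝ) + b) i
  rw [jacobiCoeff, jacobiCoeff, show i + (l + 1) - (i + 1) = l by omega,
    show i + (l + 1) - i = l + 1 by omega]
  push_cast at ha hb ⊢
  linear_combination genBinom (i + (l + 1) + a) l * (i + 1 + a) * hb -
    genBinom (i + (l + 1) + b) i * (l + 1 + b) * ha

/-- The product `(s - 1) ^ i * s ^ l`; the shifted Jacobi polynomials of degree `n` expand in those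
with `i + l = n`. -/
def jacobiMonomial (i l : ℕ) : ℝ[X] := (Polynomial.X - 1) ^ i * Polynomial.X ^ l

/-- The Jacobi polynomial moved from `[-1, 1]` to `[0, 1]`, as a polynomial in `s = ‖x‖²`:
`P_n^{(a,b)}(2s - 1)`. -/
def shiftedJacobi (n : ℕ) (a b : ℝ) : ℝ[X] := (jacobiPoly n a b).comp (2 * Polynomial.X - 1)

theorem shiftedJacobi_eq_sum (n : ℕ) (a b : ℝ) :
    shiftedJacobi n a b =
      ∑ i ∈ Finset.range (n + 1), jacobiCoeff n a b i • jacobiMonomial i (n - i) := by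
  have half : Polynomial.C (2⁻¹ : ℝ) * 2 = 1 := by
    rw [← Polynomial.C_ofNat, ← Polynomial.C_mul, inv_mul_cancel₀ two_ne_zero, Polynomial.C_1]
  have hX_sub : Polynomial.C (2⁻¹ : ℝ) * (2 * Polynomial.X - 1 - 1) = Polynomial.X - 1 := by
    linear_combination (Polynomial.X - 1) * half
  have hX_add : Polynomial.C (2⁻¹ : ℝ) * (2 * Polynomial.X - 1 + 1) = Polynomial.X := by
    linear_combination Polynomial.X * half
  rw [shiftedJacobi, jacobiPoly, Polynomial.sum_comp]
  refine Finset.sum_congr rfl fun i _ => ?_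
  simp only [Polynomial.mul_comp, Polynomial.pow_comp, Polynomial.C_comp, Polynomial.sub_comp,
    Polynomial.add_comp, Polynomial.X_comp, Polynomial.one_comp, hX_sub, hX_add, jacobiMonomial,
    jacobiCoeff, Polynomial.smul_eq_C_mul, mul_assoc]

/-- The Jacobi differential operator `s(1 - s) D² + (b + 1 - (a + b + 2) s) D` on `[0, 1]`. -/
def jacobiOp (a b : ℝ) : ℝ[X] →ₗ[ℝ] ℝ[X] :=
  LinearMap.mulLeft ℝ (Polynomial.X * (1 - Polynomial.X)) ∘ₗ
      Polynomial.derivative ∘ₗ Polynomial.derivative +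
    LinearMap.mulLeft ℝ (Polynomial.C (b + 1) - Polynomial.C (a + b + 2) * Polynomial.X) ∘ₗ
      Polynomial.derivative

theorem jacobiOp_apply (a b : ℝ) (q : ℝ[X]) :
    jacobiOp a b q =
      Polynomial.X * (1 - Polynomial.X) * Polynomial.derivative (Polynomial.derivative q) +
        (Polynomial.C (b + 1) - Polynomial.C (a + b + 2) * Polynomial.X) *
          Polynomial.derivative q :=
  rfl

theorem jacobiOp_jacobiMonomial (a b : ℝ) (i l : ℕ) :
    jacobiOp a b (jacobiMonomial i l) =
      -((i * (i + a)) • jacobiMonomial (i - 1) (l + 1) +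
        (2 * i * l + (b + 1) * i + (a + 1) * l) • jacobiMonomial i l +
        (l * (l + b)) • jacobiMonomial (i + 1) (l - 1)) := by
  simp only [jacobiOp_apply, jacobiMonomial, Polynomial.smul_eq_C_mul]
  have two : Polynomial.C (2 : ℝ) = 2 := map_ofNat _ 2
  rcases i with _ | _ | i <;> rcases l with _ | _ | l <;>
    simp only [Polynomial.derivative_mul, Polynomial.derivative_pow, Polynomial.derivative_sub,
      Polynomial.derivative_X, Polynomial.derivative_one, Polynomial.derivative_natCast, map_add,
      map_mul, map_natCast, two, Nat.cast_add, Nat.cast_zero, Nat.cast_one, map_one, map_zero,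
      pow_zero, zero_add, Nat.zero_sub, Nat.add_sub_cancel] <;> ring

-- `jacobiOp` is tridiagonal on the monomials of degree `n`, and `jacobiCoeff_succ` says that the
-- coefficients balance its two off-diagonal parts: each becomes diagonal after a shift of index.
theorem jacobiOp_shiftedJacobi (n : ℕ) (a b : ℝ) :
    jacobiOp a b (shiftedJacobi n a b) = -(n * (n + a + b + 1)) • shiftedJacobi n a b := by
  let c := jacobiCoeff n a b
  let A : ℕ → ℝ := fun i => i * (i + a)
  let D : ℕ → ℝ := fun i => (n - i) * (n - i + b)
  have balance {i : ℕ} (hi : i < n) : c (i + 1) * A (i + 1) = c i * D i := by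
    simpa only [A, Nat.cast_add_one] using jacobiCoeff_succ a b hi
  have lower : ∑ i ∈ Finset.range (n + 1), (c i * A i) • jacobiMonomial (i - 1) (n - i + 1) =
      ∑ i ∈ Finset.range (n + 1), (c i * D i) • jacobiMonomial i (n - i) := by
    rw [Finset.sum_range_succ', Finset.sum_range_succ _ n]
    simp only [A, D, Nat.cast_zero, sub_self, zero_mul, mul_zero, zero_smul, add_zero]
    refine Finset.sum_congr rfl fun i hi => ?_
    have hi := Finset.mem_range.1 hi
    rw [← balance hi, Nat.add_sub_cancel, show n - (i + 1) + 1 = n - i by omega]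
  have upper : ∑ i ∈ Finset.range (n + 1), (c i * D i) • jacobiMonomial (i + 1) (n - i - 1) =
      ∑ i ∈ Finset.range (n + 1), (c i * A i) • jacobiMonomial i (n - i) := by
    rw [Finset.sum_range_succ, Finset.sum_range_succ' _ n]
    simp only [A, D, Nat.cast_zero, sub_self, zero_mul, mul_zero, zero_smul, add_zero]
    refine Finset.sum_congr rfl fun i hi => ?_
    rw [← balance (Finset.mem_range.1 hi), Nat.sub_sub]
  calc jacobiOp a b (shiftedJacobi n a b)
      = -(∑ i ∈ Finset.range (n + 1), (c i * A i) • jacobiMonomial (i - 1) (n - i + 1) +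
          ∑ i ∈ Finset.range (n + 1), (c i * (2 * i * (n - i) + (b + 1) * i + (a + 1) * (n - i))) •
            jacobiMonomial i (n - i) +
          ∑ i ∈ Finset.range (n + 1), (c i * D i) • jacobiMonomial (i + 1) (n - i - 1)) := by
        rw [shiftedJacobi_eq_sum, map_sum, ← Finset.sum_add_distrib, ← Finset.sum_add_distrib,
          ← Finset.sum_neg_distrib]
        refine Finset.sum_congr rfl fun i hi => ?_
        rw [map_smul, jacobiOp_jacobiMonomial, Nat.cast_sub (Finset.mem_range_succ_iff.1 hi)]
        module
    _ = -(n * (n + a + b + 1)) • shiftedJacobi n a b := by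
        rw [lower, upper, shiftedJacobi_eq_sum, Finset.smul_sum, ← Finset.sum_add_distrib,
          ← Finset.sum_add_distrib, ← Finset.sum_neg_distrib]
        refine Finset.sum_congr rfl fun i _ => ?_
        simp only [A, D]
        module

end JacobiEquation

section RadialLaplacian

variable {d : ℕ}

theorem pderiv_sumSq (i : Fin d) : pderiv i (sumSq d) = C 2 * X i := by
  simp [sumSq, map_sum, Derivation.leibniz_pow, pderiv_X, Pi.single_apply, map_ofNat C]

theorem mvLaplacian_aeval_sumSq_mul {m : ℕ} {Y : MvPolynomial (Fin d) ℝ} (hY : Y.IsHomogeneous m)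
    (hharm : mvLaplacian Y = 0) (q : ℝ[X]) :
    mvLaplacian (Polynomial.aeval (sumSq d) q * Y) =
      C 4 * (Polynomial.aeval (sumSq d) (Polynomial.X * Polynomial.derivative
        (Polynomial.derivative q) + Polynomial.C (m + (d : ℝ) / 2) * Polynomial.derivative q) *
          Y) := by
  have hterm (i : Fin d) : pderiv i (pderiv i (Polynomial.aeval (sumSq d) q * Y)) =
      C 4 * Polynomial.aeval (sumSq d) (Polynomial.derivative (Polynomial.derivative q)) * Y *
        X i ^ 2 +
      C 2 * Polynomial.aeval (sumSq d) (Polynomial.derivative q) * Y +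
      C 4 * Polynomial.aeval (sumSq d) (Polynomial.derivative q) * (X i * pderiv i Y) +
      Polynomial.aeval (sumSq d) q * pderiv i (pderiv i Y) := by
    simp only [Derivation.leibniz, Derivation.map_aeval, pderiv_sumSq, map_add, smul_eq_mul,
      pderiv_C, pderiv_X_self]
    simp only [map_ofNat C]
    ring
  have heuler : ∑ i, X i * pderiv i Y = C (m : ℝ) * Y := by
    rw [hY.sum_X_mul_pderiv, nsmul_eq_mul, map_natCast]
  have hconst : (d : MvPolynomial (Fin d) ℝ) * C 2 = C 4 * C ((d : ℝ) / 2) := by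
    rw [← map_natCast C d, ← C_mul, ← C_mul]
    ring_nf
  calc mvLaplacian (Polynomial.aeval (sumSq d) q * Y)
      = C 4 * Polynomial.aeval (sumSq d) (Polynomial.derivative (Polynomial.derivative q)) * Y *
          sumSq d +
        (d : MvPolynomial (Fin d) ℝ) *
          (C 2 * Polynomial.aeval (sumSq d) (Polynomial.derivative q) * Y) +
        C 4 * Polynomial.aeval (sumSq d) (Polynomial.derivative q) * (C (m : ℝ) * Y) +
        Polynomial.aeval (sumSq d) q * mvLaplacian Y := by
        simp only [mvLaplacian, hterm, Finset.sum_add_distrib, ← Finset.mul_sum, heuler,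
          show ∑ i, X i ^ 2 = sumSq d from rfl, Finset.sum_const, Finset.card_univ,
          Fintype.card_fin, nsmul_eq_mul]
        ring
    _ = _ := by
        simp only [hharm, map_add, map_mul, Polynomial.aeval_X, Polynomial.aeval_C, algebraMap_eq]
        linear_combination
          (Polynomial.aeval (sumSq d) (Polynomial.derivative q) * Y) * hconst

theorem aeval_shiftedJacobi (n : ℕ) (a b : ℝ) :
    Polynomial.aeval (sumSq d) (shiftedJacobi n a b) =
      Polynomial.aeval (2 * sumSq d - 1) (jacobiPoly n a b) := by
  rw [shiftedJacobi, Polynomial.aeval_comp, map_sub, map_mul, Polynomial.aeval_X, map_one,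
    map_ofNat]

theorem mvLaplacian_one_sub_sumSq_mul {m : ℕ} {b : ℝ} (hb : b = m + ((d : ℝ) - 2) / 2)
    {Y : MvPolynomial (Fin d) ℝ} (hY : Y.IsHomogeneous m) (hharm : mvLaplacian Y = 0) (q : ℝ[X]) :
    mvLaplacian ((1 - sumSq d) * (Polynomial.aeval (sumSq d) q * Y)) =
      C 4 * (Polynomial.aeval (sumSq d) (jacobiOp 1 b q - (b + 1) • q) * Y) := by
  have hradial : (1 - sumSq d) * (Polynomial.aeval (sumSq d) q * Y) =
      Polynomial.aeval (sumSq d) ((1 - Polynomial.X) * q) * Y := by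
    simp only [map_mul, map_sub, map_one, Polynomial.aeval_X, mul_assoc]
  rw [hradial, mvLaplacian_aeval_sumSq_mul hY hharm, show (m : ℝ) + d / 2 = b + 1 by rw [hb]; ring]
  congr 3
  simp only [jacobiOp_apply, Polynomial.derivative_mul, map_add, map_sub,
    Polynomial.derivative_one, Polynomial.derivative_X, Polynomial.smul_eq_C_mul, map_ofNat,
    Polynomial.derivative_neg, zero_sub, neg_mul, one_mul, Polynomial.C_1]
  ring

theorem mvLaplacian_one_sub_sumSq_mul_jacobi {m : ℕ} (j : ℕ) {b : ℝ}
    (hb : b = m + ((d : ℝ) - 2) / 2) {Y : MvPolynomial (Fin d) ℝ} (hY : Y.IsHomogeneous m)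
    (hharm : mvLaplacian Y = 0) :
    mvLaplacian ((1 - sumSq d) * (Polynomial.aeval (2 * sumSq d - 1) (jacobiPoly j 1 b) * Y)) =
      C (-(4 * ((j + 1) * (j + 1 + b)))) *
        (Polynomial.aeval (2 * sumSq d - 1) (jacobiPoly j 1 b) * Y) := by
  rw [← aeval_shiftedJacobi, mvLaplacian_one_sub_sumSq_mul hb hY hharm, jacobiOp_shiftedJacobi,
    ← sub_smul, show -(j * (j + 1 + b + 1)) - (b + 1) = -((j + 1) * (j + 1 + b)) by ring,
    map_smul, smul_mul_assoc, smul_eq_C_mul, ← mul_assoc, ← C_mul, mul_neg]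

end RadialLaplacian

section WeightedInnerProduct

variable {d : ℕ}

/-- The inner product of `L²(W₁)` on the unit ball, for the weight `W₁(y) = 1 - ‖y‖²`, normalized
so that `⟨1, 1⟩ = 1`. -/
def innerW1 (d : ℕ) (f g : Edim d → ℝ) : ℝ :=
  ((d : ℝ) * ((d : ℝ) / 2 + 1) / omegaD d) *
    ∫ y in closedBall (0 : Edim d) 1, f y * g y * (1 - ‖y‖ ^ 2)

/-- The projection `proj_{V_m^d(W₁)} g`, as the integral of `g` against the reproducing kernel. -/
def projW1 (d : ℕ) (Y : (m : ℕ) → Fin (sigmaDim d m) → MvPolynomial (Fin d) ℝ) (m : ℕ)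
    (g : Edim d → ℝ) (x : Edim d) : ℝ :=
  innerW1 d g (kernW1 d Y m x)

theorem innerW1_const_mul_right (f g : Edim d → ℝ) (c : ℝ) :
    innerW1 d f (fun y => c * g y) = c * innerW1 d f g := by
  simp only [innerW1, mul_left_comm _ c, mul_assoc c, integral_const_mul]

theorem innerW1_sum_right {ι : Type*} (s : Finset ι) {f : Edim d → ℝ} {g : ι → Edim d → ℝ}
    (hf : ContinuousOn f (closedBall 0 1)) (hg : ∀ i ∈ s, ContinuousOn (g i) (closedBall 0 1)) :
    innerW1 d f (fun y => ∑ i ∈ s, g i y) = ∑ i ∈ s, innerW1 d f (g i) := by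
  have hintegral : ∀ i ∈ s,
      IntegrableOn (fun y => f y * g i y * (1 - ‖y‖ ^ 2)) (closedBall (0 : Edim d) 1) :=
    fun i hi => ((hf.mul (hg i hi)).mul (by fun_prop)).integrableOn_compact
      (isCompact_closedBall 0 1)
  simp only [innerW1, Finset.mul_sum, Finset.sum_mul]
  rw [integral_finsetSum s hintegral, Finset.mul_sum]

theorem kernW1_eq_sum (Y : (m : ℕ) → Fin (sigmaDim d m) → MvPolynomial (Fin d) ℝ) (m : ℕ)
    (x : Edim d) :
    kernW1 d Y m x = fun y => ∑ j ∈ Finset.range (m / 2 + 1), ∑ ν : Fin (sigmaDim d (m - 2 * j)),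
      pEval (PW1 d Y m j ν) x / innerW1 d (pEval (PW1 d Y m j ν)) (pEval (PW1 d Y m j ν)) *
        pEval (PW1 d Y m j ν) y := by
  ext y
  simp only [kernW1, innerW1, sq (pEval _ _), div_mul_eq_mul_div]

theorem projW1_eq_sum (Y : (m : ℕ) → Fin (sigmaDim d m) → MvPolynomial (Fin d) ℝ) (m : ℕ)
    {g : Edim d → ℝ} (hg : ContinuousOn g (closedBall 0 1)) (x : Edim d) :
    projW1 d Y m g x = ∑ j ∈ Finset.range (m / 2 + 1), ∑ ν : Fin (sigmaDim d (m - 2 * j)),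
      innerW1 d g (pEval (PW1 d Y m j ν)) /
          innerW1 d (pEval (PW1 d Y m j ν)) (pEval (PW1 d Y m j ν)) *
        pEval (PW1 d Y m j ν) x := by
  have hcont (c : ℝ) (p : MvPolynomial (Fin d) ℝ) :
      ContinuousOn (fun y => c * pEval p y) (closedBall 0 1) :=
    ((contDiff_pEval (n := 0) p).continuous.const_mul c).continuousOn
  rw [projW1, kernW1_eq_sum, innerW1_sum_right _ hg fun j _ =>
    continuousOn_finsetSum _ fun ν _ => hcont _ _]
  refine Finset.sum_congr rfl fun j _ => ?_
  rw [innerW1_sum_right _ hg fun ν _ => hcont _ _]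
  refine Finset.sum_congr rfl fun ν _ => ?_
  rw [innerW1_const_mul_right, div_mul_comm]

end WeightedInnerProduct

section SobolevInnerProduct

theorem contDiffOn_of_eq_one_sub_norm_sq_mul {E : Type*} [NormedAddCommGroup E]
    [InnerProductSpace ℝ E] {n : WithTop ℕ∞} {s : Set E} {f g : E → ℝ} (hg : ContDiffOn ℝ n g s)
    (hfg : ∀ x ∈ s, f x = (1 - ‖x‖ ^ 2) * g x) : ContDiffOn ℝ n f s :=
  ((contDiff_const.sub (contDiff_norm_sq ℝ)).contDiffOn.mul hg).congr hfg

theorem eq_zero_of_eq_one_sub_norm_sq_mul {E : Type*} [SeminormedAddCommGroup E] {f g : E → ℝ}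
    (hfg : ∀ x ∈ closedBall (0 : E) 1, f x = (1 - ‖x‖ ^ 2) * g x) :
    ∀ x ∈ sphere (0 : E) 1, f x = 0 := fun x hx => by
  rw [hfg x (sphere_subset_closedBall hx), mem_sphere_zero_iff_norm.1 hx]
  ring

variable {d : ℕ}

-- The integral sign over the ball in `innerI` extends over the whole sum, so the spherical term is
-- itself integrated over the ball; it is zero here because `f` vanishes on the sphere.
theorem innerI_eq_neg_integral_mul_laplacian (lam : ℝ) {f u : Edim d → ℝ}
    (hf : ContDiffOn ℝ 1 f (closedBall 0 1)) (hf0 : ∀ x ∈ sphere (0 : Edim d) 1, f x = 0)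
    (hu : ContDiff ℝ 2 u) :
    innerI d lam f u = -(lam / omegaD d * ∫ x in closedBall (0 : Edim d) 1, f x * Δ u x) := by
  have hsphere : ∫ y : sphere (0 : Edim d) 1, f y * u y ∂(sphMeasure d) = 0 := by
    simp only [fun y : sphere (0 : Edim d) 1 => hf0 y y.2, zero_mul, integral_zero]
  simp only [innerI, hsphere, mul_zero, add_zero]
  rw [setIntegral_inner_gradient_eq_neg (isCompact_closedBall 0 1) (convex_closedBall 0 1) hf
    (fun x hx => hf0 x (frontier_closedBall_subset_sphere hx)) hu, mul_neg]

theorem innerI_pEval_one_sub_sumSq_mul (hd : 0 < d) (lam : ℝ) {c : ℝ}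
    {P : MvPolynomial (Fin d) ℝ} (hP : mvLaplacian ((1 - sumSq d) * P) = C (-c) * P)
    {f g : Edim d → ℝ} (hg : ContDiffOn ℝ 1 g (closedBall 0 1))
    (hfg : ∀ x ∈ closedBall (0 : Edim d) 1, f x = (1 - ‖x‖ ^ 2) * g x) :
    innerI d lam f (pEval ((1 - sumSq d) * P)) =
      lam * c / (d * ((d : ℝ) / 2 + 1)) * innerW1 d g (pEval P) := by
  have hintegral : ∫ x in closedBall (0 : Edim d) 1, f x * Δ (pEval ((1 - sumSq d) * P)) x =
      -c * ∫ x in closedBall (0 : Edim d) 1, g x * pEval P x * (1 - ‖x‖ ^ 2) := by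
    rw [← integral_const_mul]
    refine setIntegral_congr_fun measurableSet_closedBall fun x hx => ?_
    rw [laplacian_pEval, hP, pEval_mul, hfg x hx, show pEval (C (-c)) x = -c from eval_C _]
    ring
  rw [innerI_eq_neg_integral_mul_laplacian lam (contDiffOn_of_eq_one_sub_norm_sq_mul hg hfg)
    (eq_zero_of_eq_one_sub_norm_sq_mul hfg) (contDiff_pEval _), hintegral, innerW1]
  have hd' : (d : ℝ) ≠ 0 := Nat.cast_ne_zero.2 hd.ne'
  field_simp

theorem innerI_pEval_eq_zero_of_harmonic (lam : ℝ) {Q : MvPolynomial (Fin d) ℝ}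
    (hQ : mvLaplacian Q = 0) {f : Edim d → ℝ} (hf : ContDiffOn ℝ 1 f (closedBall 0 1))
    (hf0 : ∀ x ∈ sphere (0 : Edim d) 1, f x = 0) : innerI d lam f (pEval Q) = 0 := by
  have hlap : Δ (pEval Q) = 0 := by
    rw [laplacian_pEval, hQ]
    exact funext fun _ => map_zero _
  rw [innerI_eq_neg_integral_mul_laplacian lam hf hf0 (contDiff_pEval _), hlap]
  simp

end SobolevInnerProduct

section Projection

variable {d : ℕ} {Y : (m : ℕ) → Fin (sigmaDim d m) → MvPolynomial (Fin d) ℝ}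

theorem Upoly_succ (m j : ℕ) (ν : Fin (sigmaDim d (m + 2 - 2 * (j + 1)))) :
    Upoly d Y (m + 2) (j + 1) ν =
      (1 - sumSq d) * PW1 d Y m j (ν.cast (by rw [mul_add, Nat.add_sub_add_right])) := by
  have hY {k l : ℕ} (h : k = l) (ν : Fin (sigmaDim d k)) : Y k ν = Y l (ν.cast (by rw [h])) := by
    subst h; rfl
  rw [Upoly, if_neg j.succ_ne_zero, PW1, hY (by rw [mul_add, Nat.add_sub_add_right]) ν, mul_assoc,
    Nat.add_sub_cancel]
  push_cast
  ring_nf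

theorem mvLaplacian_one_sub_sumSq_mul_PW1 (hYhom : ∀ m ν, (Y m ν).IsHomogeneous m)
    (hYharm : ∀ m ν, mvLaplacian (Y m ν) = 0) {m j : ℕ} (hj : 2 * j ≤ m)
    (ν : Fin (sigmaDim d (m - 2 * j))) :
    mvLaplacian ((1 - sumSq d) * PW1 d Y m j ν) =
      C (-(4 * ((j + 1) * (m - j + (d : ℝ) / 2)))) * PW1 d Y m j ν := by
  have hb : (m : ℝ) - 2 * j + ((d : ℝ) - 2) / 2 = ((m - 2 * j : ℕ) : ℝ) + ((d : ℝ) - 2) / 2 := by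
    push_cast [hj]; ring
  rw [PW1, mvLaplacian_one_sub_sumSq_mul_jacobi j hb (hYhom _ ν) (hYharm _ ν)]
  congr 2
  ring

theorem innerI_div_innerI_eq_innerW1_div_innerW1 (hd : 0 < d) {lam : ℝ} (hlam : lam ≠ 0)
    (hYhom : ∀ m ν, (Y m ν).IsHomogeneous m) (hYharm : ∀ m ν, mvLaplacian (Y m ν) = 0)
    {f g : Edim d → ℝ} (hg : ContDiffOn ℝ 1 g (closedBall 0 1))
    (hfg : ∀ x ∈ closedBall (0 : Edim d) 1, f x = (1 - ‖x‖ ^ 2) * g x)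
    {m j : ℕ} (hj : 2 * j ≤ m) (ν : Fin (sigmaDim d (m - 2 * j))) :
    innerI d lam f (pEval ((1 - sumSq d) * PW1 d Y m j ν)) /
        innerI d lam (pEval ((1 - sumSq d) * PW1 d Y m j ν))
          (pEval ((1 - sumSq d) * PW1 d Y m j ν)) =
      innerW1 d g (pEval (PW1 d Y m j ν)) /
        innerW1 d (pEval (PW1 d Y m j ν)) (pEval (PW1 d Y m j ν)) := by
  have hlaplacian := mvLaplacian_one_sub_sumSq_mul_PW1 hYhom hYharm hj ν
  have hU : ∀ x ∈ closedBall (0 : Edim d) 1, pEval ((1 - sumSq d) * PW1 d Y m j ν) x =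
      (1 - ‖x‖ ^ 2) * pEval (PW1 d Y m j ν) x := fun x _ => by
    rw [pEval_mul, pEval_one_sub_sumSq]
  have hfactor : lam * (4 * ((j + 1) * (m - j + (d : ℝ) / 2))) / (d * ((d : ℝ) / 2 + 1)) ≠ 0 := by
    have hjm : (j : ℝ) ≤ m := Nat.cast_le.2 (by omega)
    have hd' : (0 : ℝ) < d := Nat.cast_pos.2 hd
    have : 0 < m - j + (d : ℝ) / 2 := by linarith
    positivity
  rw [innerI_pEval_one_sub_sumSq_mul hd lam hlaplacian hg hfg,
    innerI_pEval_one_sub_sumSq_mul hd lam hlaplacian (contDiff_pEval _).contDiffOn hU,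
    mul_div_mul_left _ _ hfactor]

theorem stmt16_general (hd : 2 ≤ d) {lam : ℝ} (hlam : lam ≠ 0)
    (hYhom : ∀ m ν, (Y m ν).IsHomogeneous m) (hYharm : ∀ m ν, mvLaplacian (Y m ν) = 0)
    {f g : Edim d → ℝ} (hg : ContDiffOn ℝ 1 g (closedBall 0 1))
    (hfg : ∀ x ∈ closedBall (0 : Edim d) 1, f x = (1 - ‖x‖ ^ 2) * g x) (m : ℕ) (x : Edim d) :
    projI d lam Y (m + 2) f x = (1 - ‖x‖ ^ 2) * projW1 d Y m g x := by
  have hf : ContDiffOn ℝ 1 f (closedBall 0 1) := contDiffOn_of_eq_one_sub_norm_sq_mul hg hfg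
  have hf0 : ∀ x ∈ sphere (0 : Edim d) 1, f x = 0 := eq_zero_of_eq_one_sub_norm_sq_mul hfg
  have hharmonic (ν : Fin (sigmaDim d (m + 2 - 2 * 0))) :
      innerI d lam f (pEval (Upoly d Y (m + 2) 0 ν)) = 0 := by
    rw [Upoly, if_pos rfl]
    exact innerI_pEval_eq_zero_of_harmonic lam (hYharm _ ν) hf hf0
  rw [projI, Nat.add_div_right m two_pos, Finset.sum_range_succ', projW1_eq_sum Y m hg.continuousOn,
    Finset.mul_sum]
  simp only [hharmonic, zero_div, zero_mul, Finset.sum_const_zero, add_zero, Upoly_succ]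
  refine Finset.sum_congr rfl fun j hj => ?_
  have hj : 2 * j ≤ m := by have := Finset.mem_range_succ_iff.1 hj; omega
  rw [Finset.mul_sum]
  refine Fintype.sum_equiv (finCongr (by rw [mul_add, Nat.add_sub_add_right])) _ _ fun ν => ?_
  rw [finCongr_apply,
    innerI_div_innerI_eq_innerW1_div_innerW1 (by omega) hlam hYhom hYharm hg hfg hj, pEval_mul,
    pEval_one_sub_sumSq, mul_left_comm]

end Projection

/-- if `f(x) = (1-‖x‖²)g(x)` then
`proj_{V_n^d(I)} f(x) = (1-‖x‖²)·proj_{V_{n-2}^d(W₁)} g(x)`. -/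
theorem stmt16 (d : ℕ) (hd : 2 ≤ d) (lam : ℝ) (hlam : 0 < lam)
    (Y : (m : ℕ) → Fin (sigmaDim d m) → MvPolynomial (Fin d) ℝ)
    (hYhom : ∀ m ν, (Y m ν).IsHomogeneous m)
    (hYharm : ∀ m ν, mvLaplacian (Y m ν) = 0)
    (hYon : ∀ (m k : ℕ) (ν : Fin (sigmaDim d m)) (μ : Fin (sigmaDim d k)),
      (1 / omegaD d) * ∫ y : sphere (0 : Edim d) 1,
          pEval (Y m ν) y * pEval (Y k μ) y ∂(sphMeasure d) =
        if m = k ∧ (ν : ℕ) = (μ : ℕ) then 1 else 0)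
    (g : Edim d → ℝ) (hg : ContDiffOn ℝ 1 g (closedBall (0 : Edim d) 1))
    (f : Edim d → ℝ) (hfg : ∀ x : Edim d, f x = (1 - ‖x‖ ^ 2) * g x)
    (n : ℕ) (hn : 2 ≤ n) (x : Edim d) (hx : x ∈ closedBall (0 : Edim d) 1) :
    projI d lam Y n f x =
      (1 - ‖x‖ ^ 2) *
        (((d : ℝ) * ((d : ℝ) / 2 + 1) / omegaD d) *
          ∫ y in closedBall (0 : Edim d) 1,
            g y * kernW1 d Y (n - 2) x y * (1 - ‖y‖ ^ 2)) := by
  obtain ⟨m, rfl⟩ := Nat.exists_eq_add_of_le' hn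
  exact stmt16_general hd hlam.ne' hYhom hYharm hg (fun x _ => hfg x) m x
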